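/- Let G be a connected graph of order n ≥ 3 that is not isomorphic to the 5-cycle C5. If 2·γnt(G) = n + 1, then G is a subdivided star, i.e., G is isomorphic to the graph obtained from a star K_{1,k} for some k ≥ 1 by subdividing every edge exactly once. -/

import Mathlib

open SimpleGraph

variable {V : Type*}

/-- The open neighborhood `N(S)` of a set `S` of vertices: all vertices having a neighbor in `S`. -/
def openNbhd (G : SimpleGraph V) (S : Set V) : Set V := {v | ∃ u ∈ S, G.Adj u v}

/-- `S` is a dominating set: every vertex not in `S` has a neighbor in `S`. -/
def IsDomSet (G : SimpleGraph V) (S : Set V) : Prop := ∀ v ∉ S, ∃ u ∈ S, G.Adj u v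

/-- `S` is a total dominating set: every vertex has a neighbor in `S`. -/
def IsTotalDomSet (G : SimpleGraph V) (S : Set V) : Prop := ∀ v, ∃ u ∈ S, G.Adj u v

/-- `S` is a neighborhood total dominating set: a dominating set such that the subgraph
induced by the open neighborhood `N(S)` has no isolated vertex. -/
def IsNTDSet (G : SimpleGraph V) (S : Set V) : Prop :=
  IsDomSet G S ∧ ∀ v ∈ openNbhd G S, ∃ u ∈ openNbhd G S, G.Adj v u

/-- The domination number `γ(G)`. -/
noncomputable def domNum (G : SimpleGraph V) : ℕ :=
  sInf {n | ∃ S : Set V, IsDomSet G S ∧ S.ncard = n}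

/-- The total domination number `γt(G)`. -/
noncomputable def totalDomNum (G : SimpleGraph V) : ℕ :=
  sInf {n | ∃ S : Set V, IsTotalDomSet G S ∧ S.ncard = n}

/-- The neighborhood total domination number `γnt(G)`. -/
noncomputable def ntdNum (G : SimpleGraph V) : ℕ :=
  sInf {n | ∃ S : Set V, IsNTDSet G S ∧ S.ncard = n}

/-- The subdivided star obtained from the star `K_{1,k}` by subdividing every edge exactly
once: vertex `0` is the center, adjacent to `1, ..., k`, and each `i` (for `1 ≤ i ≤ k`) is
adjacent to the leaf `k + i`. It has order `2 * k + 1`. -/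
def subdividedStar (k : ℕ) : SimpleGraph (Fin (2 * k + 1)) :=
  SimpleGraph.fromRel (fun a b =>
    (a.val = 0 ∧ 1 ≤ b.val ∧ b.val ≤ k) ∨ (1 ≤ a.val ∧ a.val ≤ k ∧ b.val = a.val + k))

/-
Splitting off pendant connected branches shows that a connected part with at least three vertices
is either spanned by a spider (all legs of length one or two) or a union of two connected parts with
at least three vertices each. A spider on three or more vertices has an NTD-set with at most half of
its vertices unless it is a subdivided star, and a subdivided star with `2k + 1` vertices together
with a vertex `v` adjacent to it has an NTD-set consisting of `v` and at most `k` other vertices.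
NTD-sets of parts of the graph glue along common vertices that belong to both sets. By induction,
`G` has an NTD-set with at most half of its vertices or is spanned by a subdivided star.

If `2 γnt(G) = n + 1`, the second case holds, and the star has `γnt(G) - 1` legs. An edge of `G`
that does not belong to it would allow a smaller NTD-set, with one exception: for two legs the two
tips may be adjacent, which makes `G` the 5-cycle.
-/

/-- `S` is an NTD-set of the part of `G` lying inside `X`: every vertex of `X \ S` has a neighbor in
`S`, and a neighbor in `X \ S` or a neighbor in `S` that itself has a neighbor in `S`. For `X = V`
this is `IsNTDSet`; written this way it only asks for edges, so that it survives enlarging the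
graph and can be glued along common vertices. -/
def IsNTDSetOn (G : SimpleGraph V) (X S : Set V) : Prop :=
  S ⊆ X ∧ ∀ v ∈ X \ S, (∃ u ∈ S, G.Adj v u) ∧
    ((∃ w ∈ X \ S, G.Adj v w) ∨ ∃ u ∈ S, G.Adj v u ∧ ∃ w ∈ S, G.Adj u w)

/-- `D` is a branch of `X` at `v`: a connected part of `X \ {v}` that is attached to `v` and whose
removal leaves the rest of `X` connected. -/
structure IsBranchAt (G : SimpleGraph V) (X : Set V) (v : V) (D : Set V) : Prop where
  subset : D ⊆ X \ {v}
  connected : (G.induce D).Connected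
  connected_sdiff : (G.induce (X \ D)).Connected
  exists_adj : ∃ u ∈ D, G.Adj v u

/-- `X` is spanned by a spider with center `c`, whose legs of length one end in the vertices of `L`
and whose legs of length two are `c, x, t x` for `x ∈ M`. Edges of `G` inside `X` that do not belong
to the spider are allowed. Spanning subdivided stars are the case `L = ∅`. -/
structure IsSpiderOn (G : SimpleGraph V) (c : V) (L M : Set V) (t : V → V) (X : Set V) : Prop where
  eq_verts : X = insert c (L ∪ M ∪ t '' M)
  adj_foot : ∀ z ∈ L, G.Adj c z
  adj_mid : ∀ x ∈ M, G.Adj c x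
  adj_tip : ∀ x ∈ M, G.Adj x (t x)
  injOn_tip : Set.InjOn t M
  disjoint_feet_mids : Disjoint L M
  tip_notMem : ∀ x ∈ M, t x ∉ insert c (L ∪ M)

variable {G : SimpleGraph V}

section Connectivity

variable {X D : Set V} {v : V}

lemma exists_adj_of_connected_induce (hX : (G.induce X).Connected) {A : Set V} (hA : A.Nonempty)
    (hAX : A ⊂ X) : ∃ a ∈ A, ∃ b ∈ X \ A, G.Adj a b := by
  obtain ⟨a, ha⟩ := hA
  obtain ⟨b, hb, hbA⟩ := Set.exists_of_ssubset hAX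
  obtain ⟨p⟩ := hX.preconnected ⟨a, hAX.subset ha⟩ ⟨b, hb⟩
  obtain ⟨d, -, hd, hd'⟩ := p.exists_boundary_dart {w | w.1 ∈ A} ha hbA
  exact ⟨d.fst, hd, d.snd, ⟨d.snd.2, hd'⟩, d.adj⟩

lemma connected_induce_of_exists_adj (hv : v ∈ X)
    (h : ∀ A ⊂ X, v ∈ A → ∃ a ∈ A, ∃ b ∈ X \ A, G.Adj a b) : (G.induce X).Connected := by
  let A : Set V := {w | ∃ hw : w ∈ X, (G.induce X).Reachable ⟨v, hv⟩ ⟨w, hw⟩}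
  have hAX : A ⊆ X := fun w hw ↦ hw.1
  by_cases hA : A = X
  · refine (connected_iff_exists_forall_reachable _).2 ⟨⟨v, hv⟩, fun w ↦ ?_⟩
    exact (hA.ge w.2).2
  · obtain ⟨a, ⟨haX, ha⟩, b, ⟨hbX, hbA⟩, hab⟩ := h A (hAX.ssubset_of_ne hA) ⟨hv, .rfl⟩
    have hab' : (G.induce X).Adj ⟨a, haX⟩ ⟨b, hbX⟩ := hab
    exact absurd ⟨hbX, ha.trans hab'.reachable⟩ hbA

lemma IsBranchAt.of_sdiff {D' : Set V} (hD : IsBranchAt G X v D) (hv : v ∈ X)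
    (hD' : IsBranchAt G (X \ D) v D') : IsBranchAt G X v D' where
  subset := hD'.subset.trans (Set.sdiff_subset_sdiff_left Set.sdiff_subset)
  connected := hD'.connected
  connected_sdiff := by
    obtain ⟨u, hu, hvu⟩ := hD.exists_adj
    have hv' : v ∈ (X \ D) \ D' := ⟨⟨hv, fun h ↦ (hD.subset h).2 rfl⟩, fun h ↦ (hD'.subset h).2 rfl⟩
    have h := connected_induce_union hD'.connected_sdiff.preconnected hD.connected.preconnected
      hv' hu hvu
    have heq : X \ D' = (X \ D) \ D' ∪ D := by
      have := hD.subset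
      have := hD'.subset
      grind
    rwa [heq]
  exists_adj := hD'.exists_adj

variable [Finite V]

lemma exists_eq_pair_of_ncard_le_two (hD : (G.induce D).Connected) (hD2 : D.ncard ≤ 2)
    (hv : v ∈ D) (hne : D ≠ {v}) : ∃ w, G.Adj v w ∧ D = {v, w} := by
  obtain ⟨v', hv', w, ⟨hw, -⟩, hvw⟩ := exists_adj_of_connected_induce hD (Set.singleton_nonempty v)
    (Set.ssubset_iff_subset_ne.2 ⟨Set.singleton_subset_iff.2 hv, hne.symm⟩)
  obtain rfl : v' = v := hv'
  refine ⟨w, hvw, (Set.eq_of_subset_of_ncard_le (Set.pair_subset hv hw) ?_).symm⟩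
  rwa [Set.ncard_pair hvw.ne]

lemma exists_isBranchAt (hX : (G.induce X).Connected) (hv : v ∈ X) (hne : X ≠ {v}) :
    ∃ D, IsBranchAt G X v D := by
  obtain ⟨w, hw, hwv⟩ : ∃ w ∈ X, w ≠ v := by grind
  obtain ⟨D, -, hD⟩ := (Set.toFinite {D | D ⊆ X \ {v} ∧ (G.induce D).Connected}).exists_le_maximal
    (a := {w}) ⟨by simp [hw, hwv], by simp⟩
  have hDX := hD.prop.1
  have hDc := hD.prop.2
  have hout : ∀ a ∈ D, ∀ b ∈ X \ D, G.Adj a b → b = v := by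
    intro a ha b hb hab
    by_contra hbv
    have hconn := connected_induce_union hDc.preconnected
      (Preconnected.of_subsingleton (G := G.induce {b})) ha rfl hab
    have : D ∪ {b} ⊆ X \ {v} := by grind
    exact hb.2 (hD.le_of_ge ⟨this, hconn⟩ Set.subset_union_left (by simp))
  have hDne : D.Nonempty := Set.nonempty_coe_sort.1 hDc.nonempty
  refine ⟨D, hDX, hDc, connected_induce_of_exists_adj (v := v) (by grind) fun A hA hvA ↦ ?_, ?_⟩
  · obtain ⟨a, ha, b, hb, hab⟩ := exists_adj_of_connected_induce hX (A := A ∪ D) ⟨v, .inl hvA⟩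
      (by grind)
    grind
  · obtain ⟨a, ha, b, hb, hab⟩ := exists_adj_of_connected_induce hX hDne (by grind)
    obtain rfl := hout a ha b hb hab
    exact ⟨a, ha, hab.symm⟩

end Connectivity

section NTD

variable {X Y S T : Set V} {v : V}

lemma IsNTDSetOn.isNTDSet (h : IsNTDSetOn G Set.univ S) : IsNTDSet G S := by
  have h' : ∀ v ∉ S, _ := fun v hv ↦ h.2 v ⟨Set.mem_univ v, hv⟩
  have hdom : ∀ v ∉ S, v ∈ openNbhd G S := fun v hv ↦
    (h' v hv).1.imp fun u hu ↦ ⟨hu.1, hu.2.symm⟩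
  refine ⟨hdom, fun v ⟨u, _, huv⟩ ↦ ?_⟩
  by_cases hv : v ∈ S
  · exact ⟨u, ⟨v, hv, huv.symm⟩, huv.symm⟩
  · obtain ⟨w, hw, hvw⟩ | ⟨u, -, hvu, w, hw, huw⟩ := (h' v hv).2
    · exact ⟨w, hdom w hw.2, hvw⟩
    · exact ⟨u, ⟨w, hw, huw.symm⟩, hvu⟩

lemma IsNTDSetOn.ntdNum_le_ncard (h : IsNTDSetOn G Set.univ S) : ntdNum G ≤ S.ncard :=
  Nat.sInf_le ⟨S, h.isNTDSet, rfl⟩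

lemma IsNTDSetOn.union (hS : IsNTDSetOn G X S) (hT : IsNTDSetOn G Y T) (hXY : X ∩ Y ⊆ S ∩ T) :
    IsNTDSetOn G (X ∪ Y) (S ∪ T) := by
  obtain ⟨hSX, hS⟩ := hS
  obtain ⟨hTY, hT⟩ := hT
  obtain ⟨hXYS, hXYT⟩ := Set.subset_inter_iff.1 hXY
  refine ⟨Set.union_subset_union hSX hTY, fun v hv ↦ ?_⟩
  rcases hv with ⟨hvX | hvY, hvn⟩
  · grind [hS v (by grind)]
  · grind [hT v (by grind)]

lemma isNTDSetOn_singleton (v : V) : IsNTDSetOn G {v} {v} :=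
  ⟨subset_rfl, fun _ hw ↦ absurd hw.1 hw.2⟩

lemma IsNTDSetOn.glue [Finite V] (hS : IsNTDSetOn G X S) (hT : IsNTDSetOn G Y T)
    (h : X ∩ Y ⊆ {v}) (hvS : v ∈ S) (hvT : v ∈ T) :
    IsNTDSetOn G (X ∪ Y) (S ∪ T) ∧ (S ∪ T).ncard + 1 ≤ S.ncard + T.ncard := by
  have hv : {v} ⊆ S ∩ T := Set.singleton_subset_iff.2 ⟨hvS, hvT⟩
  refine ⟨hS.union hT (h.trans hv), ?_⟩
  have := Set.ncard_le_ncard hv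
  rw [Set.ncard_singleton] at this
  have := Set.ncard_union_add_ncard_inter S T
  omega

end NTD

section Spider

variable {c : V} {L M X : Set V} {t : V → V}

lemma isSpiderOn_singleton (c : V) (t : V → V) : IsSpiderOn G c ∅ ∅ t {c} := by
  constructor <;> simp

namespace IsSpiderOn

variable (hs : IsSpiderOn G c L M t X)
include hs

lemma center_notMem_mids : c ∉ M := fun hc ↦ (hs.adj_mid c hc).ne rfl

lemma insert_foot {z : V} (hz : z ∉ X) (hcz : G.Adj c z) :
    IsSpiderOn G c (insert z L) M t (insert z X) := by
  obtain ⟨rfl, hfoot, hmid, htip, hinj, hdisj, hnot⟩ := hs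
  constructor <;> grind

lemma exists_insert_leg {x y : V} (hx : x ∉ X) (hy : y ∉ X) (hcx : G.Adj c x)
    (hxy : G.Adj x y) : ∃ t', IsSpiderOn G c L (insert x M) t' (insert x (insert y X)) := by
  classical
  have hne := hxy.ne
  obtain ⟨rfl, hfoot, hmid, htip, hinj, hdisj, hnot⟩ := hs
  have hxM : x ∉ M := by grind
  have ht : Set.EqOn (Function.update t x y) t M := fun w hw ↦
    Function.update_of_ne (ne_of_mem_of_not_mem hw hxM) y t
  have himage : Function.update t x y '' insert x M = insert y (t '' M) := by
    rw [Set.image_insert_eq, ht.image_eq, Function.update_self]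
  refine ⟨Function.update t x y, ?_, hfoot, ?_, ?_, ?_, by grind, ?_⟩
  · grind
  · exact Set.forall_mem_insert.2 ⟨hcx, hmid⟩
  · exact Set.forall_mem_insert.2 ⟨by simpa, fun w hw ↦ by simpa [ht hw] using htip w hw⟩
  · rw [Set.injOn_insert hxM, ht.image_eq, Function.update_self]
    exact ⟨ht.injOn_iff.2 hinj, by grind⟩
  · exact Set.forall_mem_insert.2 ⟨by grind, fun w hw ↦ by grind [ht hw]⟩

lemma ncard_eq [Finite V] : X.ncard = 1 + L.ncard + 2 * M.ncard := by
  have hcM := hs.center_notMem_mids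
  obtain ⟨rfl, hfoot, -, -, hinj, hdisj, hnot⟩ := hs
  have hc : c ∉ L ∪ M ∪ t '' M := by
    rintro ((h | h) | ⟨x, hx, rfl⟩)
    · exact (hfoot c h).ne rfl
    · exact hcM h
    · exact hnot x hx (.inl rfl)
  have ht : Disjoint (L ∪ M) (t '' M) := by grind
  rw [Set.ncard_insert_of_notMem hc, Set.ncard_union_eq ht, Set.ncard_union_eq hdisj,
    hinj.ncard_image]
  omega

lemma exists_union_of_ncard_le_two [Finite V] {D : Set V} (hD : (G.induce D).Connected)
    (hD2 : D.ncard ≤ 2) (hXD : Disjoint X D) {u : V} (hu : u ∈ D) (hcu : G.Adj c u) :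
    ∃ L M t, IsSpiderOn G c L M t (X ∪ D) := by
  by_cases hDu : D = {u}
  · subst hDu
    rw [Set.union_singleton]
    exact ⟨_, _, _, hs.insert_foot (by grind) hcu⟩
  · obtain ⟨y, huy, rfl⟩ := exists_eq_pair_of_ncard_le_two hD hD2 hu hDu
    obtain ⟨t', ht'⟩ := hs.exists_insert_leg (by grind) (by grind) hcu huy
    rw [Set.union_comm, Set.insert_union, Set.singleton_union]
    exact ⟨_, _, _, ht'⟩

lemma isNTDSetOn_insert_center {p : V} (hp : p ∈ L ∪ M) :
    IsNTDSetOn G X (insert c (insert p M)) := by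
  obtain ⟨rfl, hfoot, hmid, htip, -, -, -⟩ := hs
  have hcp : G.Adj c p := hp.elim (hfoot p) (hmid p)
  refine ⟨by grind, ?_⟩
  rintro w ⟨rfl | (hw | hw) | ⟨x, hx, rfl⟩, hwS⟩
  · grind
  · exact ⟨⟨c, by grind, (hfoot w hw).symm⟩,
      .inr ⟨c, by grind, (hfoot w hw).symm, p, by grind, hcp⟩⟩
  · grind
  · exact ⟨⟨x, by grind, (htip x hx).symm⟩,
      .inr ⟨x, by grind, (htip x hx).symm, c, by grind, (hmid x hx).symm⟩⟩

end IsSpiderOn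

end Spider

section HalfBound

variable {c u v : V} {L M X : Set V} {t : V → V}

/-- `X` has an NTD-set that contains `v` and has at most `(|X| + 1) / 2` vertices. Sets of this kind
for two parts meeting only in `v` glue without loss. -/
def HasRootedNTDSet (G : SimpleGraph V) (X : Set V) (v : V) : Prop :=
  ∃ S, IsNTDSetOn G X S ∧ v ∈ S ∧ 2 * S.ncard ≤ X.ncard + 1

/-- `X` has an NTD-set with at most half of its vertices. -/
def HasHalfNTDSet (G : SimpleGraph V) (X : Set V) : Prop :=
  ∃ S, IsNTDSetOn G X S ∧ 2 * S.ncard ≤ X.ncard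

namespace IsSpiderOn

lemma isNTDSetOn_insert_tips (hs : IsSpiderOn G c ∅ M t X) (hM : M.Nonempty) (hv : v ∉ X)
    (hvc : G.Adj v c) : IsNTDSetOn G (insert v X) (insert v (t '' M)) := by
  obtain ⟨rfl, -, hmid, htip, -, -, hnot⟩ := hs
  obtain ⟨x, hx⟩ := hM
  refine ⟨by grind, ?_⟩
  rintro w ⟨rfl | rfl | (hw | hw) | ⟨y, hy, rfl⟩, hwS⟩
  · grind
  · exact ⟨⟨v, by grind, hvc.symm⟩, .inl ⟨x, by grind, hmid x hx⟩⟩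
  · grind
  · exact ⟨⟨t w, by grind, htip w hw⟩, .inl ⟨c, by grind, (hmid w hw).symm⟩⟩
  · grind

lemma isNTDSetOn_insert_mid_tips {x : V} (hs : IsSpiderOn G c ∅ M t X) (hx : x ∈ M) (hv : v ∉ X)
    (hvx : G.Adj v x) : IsNTDSetOn G (insert v X) (insert v (insert x (t '' (M \ {x})))) := by
  have hcM := hs.center_notMem_mids
  obtain ⟨rfl, -, hmid, htip, -, -, hnot⟩ := hs
  have hxt := (htip x hx).symm
  refine ⟨by grind, ?_⟩
  rintro w ⟨rfl | rfl | (hw | hw) | ⟨y, hy, rfl⟩, hwS⟩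
  · grind
  · exact ⟨⟨x, by grind, hmid x hx⟩, .inr ⟨x, by grind, hmid x hx, v, by grind, hvx.symm⟩⟩
  · grind
  · exact ⟨⟨t w, by grind, htip w hw⟩, .inl ⟨c, by grind, (hmid w hw).symm⟩⟩
  · obtain rfl : y = x := by grind
    exact ⟨⟨y, by grind, hxt⟩, .inr ⟨y, by grind, hxt, v, by grind, hvx.symm⟩⟩

lemma isNTDSetOn_insert_center_mids {x : V} (hs : IsSpiderOn G c ∅ M t X) (hx : x ∈ M)
    (hv : v ∉ X) (hvx : G.Adj v (t x)) :
    IsNTDSetOn G (insert v X) (insert v (insert c (M \ {x}))) := by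
  have hcM := hs.center_notMem_mids
  obtain ⟨rfl, -, hmid, htip, -, -, hnot⟩ := hs
  have hxc := (hmid x hx).symm
  refine ⟨by grind, ?_⟩
  rintro w ⟨rfl | rfl | (hw | hw) | ⟨y, hy, rfl⟩, hwS⟩
  · grind
  · grind
  · grind
  · obtain rfl : w = x := by grind
    exact ⟨⟨c, by grind, hxc⟩, .inl ⟨t w, by grind, htip w hw⟩⟩
  · obtain rfl | hyx := eq_or_ne y x
    · exact ⟨⟨v, by grind, hvx.symm⟩, .inl ⟨y, by grind, (htip y hy).symm⟩⟩
    · exact ⟨⟨y, by grind, (htip y hy).symm⟩,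
        .inr ⟨y, by grind, (htip y hy).symm, c, by grind, (hmid y hy).symm⟩⟩

end IsSpiderOn

lemma IsSpiderOn.exists_isNTDSetOn_insert [Finite V] (hs : IsSpiderOn G c ∅ M t X)
    (hM : M.Nonempty) (hu : u ∈ X) (hv : v ∉ X) (hvu : G.Adj v u) :
    ∃ S, IsNTDSetOn G (insert v X) S ∧ v ∈ S ∧ 2 * S.ncard ≤ X.ncard + 1 := by
  suffices ∃ S, IsNTDSetOn G (insert v X) (insert v S) ∧ S.ncard ≤ M.ncard by
    obtain ⟨S, hS, hSM⟩ := this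
    refine ⟨insert v S, hS, Set.mem_insert v S, ?_⟩
    have := Set.ncard_insert_le v S
    rw [hs.ncard_eq, Set.ncard_empty]
    omega
  have hcard : ∀ x ∈ M, (M \ {x}).ncard + 1 = M.ncard := fun x hx ↦
    Set.ncard_sdiff_singleton_add_one hx
  rw [hs.eq_verts] at hu
  obtain rfl | (hu | hx) | ⟨x, hx, rfl⟩ := hu
  · exact ⟨_, hs.isNTDSetOn_insert_tips hM hv hvu, Set.ncard_image_le⟩
  · exact absurd hu (Set.notMem_empty u)
  · refine ⟨_, hs.isNTDSetOn_insert_mid_tips hx hv hvu, (Set.ncard_insert_le _ _).trans ?_⟩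
    rw [← hcard u hx]
    exact Nat.succ_le_succ Set.ncard_image_le
  · refine ⟨_, hs.isNTDSetOn_insert_center_mids hx hv hvu, (Set.ncard_insert_le _ _).trans ?_⟩
    rw [← hcard x hx]

/-- `X` is spanned by a subdivided star with at least three vertices. -/
def HasSpanningSubdividedStar (G : SimpleGraph V) (X : Set V) : Prop :=
  ∃ c M t, M.Nonempty ∧ IsSpiderOn G c ∅ M t X

namespace IsSpiderOn

variable (hs : IsSpiderOn G c L M t X)
include hs

lemma exists_isNTDSetOn_of_mids_nonempty (hM : M.Nonempty) :
    ∃ S, IsNTDSetOn G X S ∧ c ∈ S ∧ S.ncard ≤ M.ncard + 1 := by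
  obtain ⟨p, hp⟩ := hM
  refine ⟨insert c M, ?_, Set.mem_insert c M, Set.ncard_insert_le c M⟩
  simpa [Set.insert_eq_of_mem hp] using hs.isNTDSetOn_insert_center (Or.inr hp)

lemma exists_isNTDSetOn_of_mids_empty (hL : L.Nonempty) (hM : M = ∅) :
    ∃ S, IsNTDSetOn G X S ∧ c ∈ S ∧ S.ncard ≤ 2 := by
  obtain ⟨p, hp⟩ := hL
  subst hM
  exact ⟨_, hs.isNTDSetOn_insert_center (Or.inl hp), Set.mem_insert c _,
    (Set.ncard_insert_le c _).trans (by simp)⟩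

lemma hasSpanningSubdividedStar_of_feet_ncard_eq_two (hL : L.ncard = 2) (hM : M = ∅) :
    HasSpanningSubdividedStar G X := by
  obtain ⟨y, z, hyz, rfl⟩ := Set.ncard_eq_two.1 hL
  obtain ⟨rfl, hfoot, -, -, -, -, -⟩ := hs
  have hcy := hfoot y (by simp)
  have hcz := hfoot z (by simp)
  subst hM
  refine ⟨y, {c}, fun _ ↦ z, Set.singleton_nonempty c, ?_, by simp, ?_, ?_,
    Set.injOn_singleton _ _, Set.empty_disjoint _, ?_⟩
  · rw [Set.union_empty, Set.image_empty, Set.union_empty, Set.image_singleton, Set.empty_union,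
      Set.singleton_union, Set.insert_comm]
  · simpa using hcy.symm
  · simpa using hcz
  · simpa using ⟨hyz.symm, hcz.ne'⟩

variable [Finite V]

lemma hasRootedNTDSet (hX : X.ncard ≠ 2) : HasRootedNTDSet G X c := by
  have hcard := hs.ncard_eq
  obtain rfl | hM := M.eq_empty_or_nonempty
  · rw [Set.ncard_empty] at hcard
    obtain rfl | hL := L.eq_empty_or_nonempty
    · obtain rfl : X = {c} := by simpa using hs.eq_verts
      exact ⟨{c}, isNTDSetOn_singleton c, rfl, by simp⟩
    · obtain ⟨S, hS, hcS, hSc⟩ := hs.exists_isNTDSetOn_of_mids_empty hL rfl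
      have := hL.ncard_pos
      exact ⟨S, hS, hcS, by omega⟩
  · obtain ⟨S, hS, hcS, hSc⟩ := hs.exists_isNTDSetOn_of_mids_nonempty hM
    exact ⟨S, hS, hcS, by omega⟩

lemma hasHalfNTDSet_or_hasSpanningSubdividedStar (hX : 3 ≤ X.ncard) :
    HasHalfNTDSet G X ∨ HasSpanningSubdividedStar G X := by
  have hcard := hs.ncard_eq
  obtain rfl | hM := M.eq_empty_or_nonempty
  · rw [Set.ncard_empty] at hcard
    obtain hL | hL : L.ncard = 2 ∨ 3 ≤ L.ncard := by omega
    · exact .inr (hs.hasSpanningSubdividedStar_of_feet_ncard_eq_two hL rfl)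
    · have hL' := Set.nonempty_of_ncard_ne_zero (s := L) (by omega)
      obtain ⟨S, hS, -, hSc⟩ := hs.exists_isNTDSetOn_of_mids_empty hL' rfl
      exact .inl ⟨S, hS, by omega⟩
  · obtain rfl | hL := L.eq_empty_or_nonempty
    · exact .inr ⟨c, M, t, hM, hs⟩
    · obtain ⟨S, hS, -, hSc⟩ := hs.exists_isNTDSetOn_of_mids_nonempty hM
      have := hL.ncard_pos
      exact .inl ⟨S, hS, by omega⟩

end IsSpiderOn

end HalfBound

section Cut

variable [Finite V] {u v w : V} {D E X Y : Set V}

lemma exists_isSpiderOn_of_isBranchAt_ncard_le_two (hX : (G.induce X).Connected) (hv : v ∈ X)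
    (h : ∀ D, IsBranchAt G X v D → D.ncard ≤ 2) : ∃ L M t, IsSpiderOn G v L M t X := by
  induction X using WellFoundedLT.induction with
  | ind X ih =>
    by_cases hne : X = {v}
    · subst hne
      exact ⟨∅, ∅, id, isSpiderOn_singleton v id⟩
    · obtain ⟨D, hD⟩ := exists_isBranchAt hX hv hne
      have hDX : D ⊆ X := hD.subset.trans Set.sdiff_subset
      obtain ⟨u, hu, hvu⟩ := hD.exists_adj
      obtain ⟨L, M, t, hs⟩ := ih (X \ D) (by grind) hD.connected_sdiff
        ⟨hv, fun hvD ↦ (hD.subset hvD).2 rfl⟩ fun E hE ↦ h E (hD.of_sdiff hv hE)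
      rw [← Set.sdiff_union_of_subset hDX]
      exact hs.exists_union_of_ncard_le_two hD.connected (h D hD) Set.disjoint_sdiff_left hu hvu

lemma exists_isSpiderOn_or_exists_connected_parts (hX : (G.induce X).Connected)
    (hX3 : 3 ≤ X.ncard) :
    (∃ c L M t, IsSpiderOn G c L M t X) ∨ ∃ D ⊆ X, 3 ≤ D.ncard ∧ 3 ≤ (X \ D).ncard ∧
      (G.induce D).Connected ∧ (G.induce (X \ D)).Connected := by
  obtain ⟨D, hD⟩ := (Set.toFinite {D | D ⊆ X ∧ 3 ≤ D.ncard ∧ (G.induce D).Connected ∧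
    (G.induce (X \ D)).Preconnected}).exists_minimal ⟨X, subset_rfl, hX3, hX, by
      rw [Set.sdiff_self]; exact Preconnected.of_subsingleton⟩
  obtain ⟨hDX, hD3, hDc, hDc'⟩ := hD.prop
  have hspider : ∀ x ∈ D, (∀ E, IsBranchAt G D x E → (G.induce (X \ E)).Preconnected) →
      ∃ L M t, IsSpiderOn G x L M t D := by
    refine fun x hx hE ↦ exists_isSpiderOn_of_isBranchAt_ncard_le_two hDc hx fun E hEb ↦ ?_
    by_contra! hE3
    have hED : E ⊆ D := hEb.subset.trans Set.sdiff_subset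
    have := hD.le_of_le ⟨hED.trans hDX, hE3, hEb.connected, hE E hEb⟩ hED
    exact (hEb.subset (this hx)).2 rfl
  obtain rfl | hss := hDX.eq_or_ssubset
  · obtain ⟨x, hx⟩ := Set.nonempty_coe_sort.1 hDc.nonempty
    exact .inl ⟨x, hspider x hx fun E hE ↦ hE.connected_sdiff.preconnected⟩
  · obtain ⟨x, hx, u, hu, hxu⟩ := exists_adj_of_connected_induce hX
      (Set.nonempty_coe_sort.1 hDc.nonempty) hss
    have hcompl : (G.induce (X \ D)).Connected :=
      have : Nonempty ↥(X \ D) := ⟨u, hu⟩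
      ⟨hDc'⟩
    obtain h3 | h2 : 3 ≤ (X \ D).ncard ∨ (X \ D).ncard ≤ 2 := by omega
    · exact .inr ⟨D, hDX, hD3, h3, hDc, hcompl⟩
    · obtain ⟨L, M, t, hs⟩ := hspider x hx fun E hE ↦ by
        have hxE : x ∈ D \ E := ⟨hx, fun h ↦ (hE.subset h).2 rfl⟩
        have hXE : X \ E = D \ E ∪ X \ D := by grind [hE.subset]
        rw [hXE]
        exact (connected_induce_union hE.connected_sdiff.preconnected hDc' hxE hu hxu).preconnected
      have := hs.exists_union_of_ncard_le_two hcompl h2 Set.disjoint_sdiff_right hu hxu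
      rw [Set.union_sdiff_cancel hDX] at this
      exact .inl ⟨x, this⟩

lemma HasRootedNTDSet.union (hX : HasRootedNTDSet G X v) (hY : HasRootedNTDSet G Y v)
    (hXY : X ∩ Y = {v}) : HasRootedNTDSet G (X ∪ Y) v := by
  obtain ⟨S, hS, hvS, hSc⟩ := hX
  obtain ⟨T, hT, hvT, hTc⟩ := hY
  obtain ⟨hST, hSTc⟩ := hS.glue hT hXY.subset hvS hvT
  have hcard := Set.ncard_union_add_ncard_inter X Y
  rw [hXY, Set.ncard_singleton] at hcard
  exact ⟨S ∪ T, hST, .inl hvS, by omega⟩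

lemma HasRootedNTDSet.insert_insert (hX : HasRootedNTDSet G X u) (hv : v ∉ X) (hw : w ∉ X)
    (hvu : G.Adj v u) (hvw : G.Adj v w) : HasRootedNTDSet G (insert v (insert w X)) v := by
  obtain ⟨S, ⟨hSX, hS⟩, huS, hSc⟩ := hX
  have hwv := hvw.symm
  have := hvw.ne
  refine ⟨insert v S, ⟨by grind, ?_⟩, Set.mem_insert v S, ?_⟩
  · rintro x ⟨rfl | rfl | hx, hxS⟩
    · grind
    · grind
    · grind [hS x (by grind)]
  · have := Set.ncard_insert_le v S
    have : (insert v (insert w X)).ncard = X.ncard + 2 := by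
      rw [Set.ncard_insert_of_notMem (by grind), Set.ncard_insert_of_notMem hw]
    omega

lemma HasHalfNTDSet.hasRootedNTDSet_insert (hX : HasHalfNTDSet G X) (hv : v ∉ X) :
    HasRootedNTDSet G (insert v X) v := by
  obtain ⟨S, hS, hSc⟩ := hX
  refine ⟨{v} ∪ S, ?_, by simp, ?_⟩
  · rw [← Set.singleton_union]
    exact (isNTDSetOn_singleton v).union hS (by grind)
  · rw [Set.ncard_insert_of_notMem hv]
    have := Set.ncard_insert_le v S
    rw [Set.singleton_union]
    omega

lemma HasHalfNTDSet.union (hX : HasHalfNTDSet G X) (hY : HasHalfNTDSet G Y)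
    (hXY : Disjoint X Y) : HasHalfNTDSet G (X ∪ Y) := by
  obtain ⟨S, hS, hSc⟩ := hX
  obtain ⟨T, hT, hTc⟩ := hY
  refine ⟨S ∪ T, hS.union hT (by grind), ?_⟩
  have := Set.ncard_union_le S T
  rw [Set.ncard_union_eq hXY]
  omega

lemma HasSpanningSubdividedStar.hasRootedNTDSet_insert (hX : HasSpanningSubdividedStar G X)
    (hu : u ∈ X) (hv : v ∉ X) (hvu : G.Adj v u) : HasRootedNTDSet G (insert v X) v := by
  obtain ⟨c, M, t, hM, hs⟩ := hX
  obtain ⟨S, hS, hvS, hSc⟩ := hs.exists_isNTDSetOn_insert hM hu hv hvu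
  refine ⟨S, hS, hvS, ?_⟩
  rw [Set.ncard_insert_of_notMem hv]
  omega

lemma HasSpanningSubdividedStar.hasHalfNTDSet_union (hX : HasSpanningSubdividedStar G X)
    (hY : HasRootedNTDSet G Y v) (hXY : Disjoint X Y) (hu : u ∈ X) (hv : v ∈ Y)
    (hvu : G.Adj v u) : HasHalfNTDSet G (X ∪ Y) := by
  obtain ⟨c, M, t, hM, hs⟩ := hX
  obtain ⟨S, hS, hvS, hSc⟩ := hs.exists_isNTDSetOn_insert hM hu (by grind) hvu
  obtain ⟨T, hT, hvT, hTc⟩ := hY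
  obtain ⟨hST, hSTc⟩ := hS.glue hT (by grind) hvS hvT
  refine ⟨S ∪ T, ?_, ?_⟩
  · rwa [Set.insert_union, Set.insert_eq_of_mem (.inr hv)] at hST
  · rw [Set.ncard_union_eq hXY]
    omega

end Cut

section MainInduction

variable [Finite V] {v : V} {X : Set V}

lemma hasRootedNTDSet_of_forall_ssubset (hX : (G.induce X).Connected) (hX2 : X.ncard ≠ 2)
    (hv : v ∈ X)
    (hroot : ∀ Y ⊂ X, (G.induce Y).Connected → Y.ncard ≠ 2 → ∀ u ∈ Y, HasRootedNTDSet G Y u)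
    (hhalf : ∀ Y ⊂ X, (G.induce Y).Connected → 3 ≤ Y.ncard →
      HasHalfNTDSet G Y ∨ HasSpanningSubdividedStar G Y) : HasRootedNTDSet G X v := by
  by_cases! hsmall : ∀ D, IsBranchAt G X v D → D.ncard ≤ 2
  · obtain ⟨L, M, t, hs⟩ := exists_isSpiderOn_of_isBranchAt_ncard_le_two hX hv hsmall
    exact hs.hasRootedNTDSet hX2
  obtain ⟨D, hD, hD3⟩ := hsmall
  have hDX := hD.subset
  obtain ⟨u, hu, hvu⟩ := hD.exists_adj
  have hvD : v ∉ D := fun h ↦ (hDX h).2 rfl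
  have hDss : D ⊂ X := by grind
  by_cases hR2 : (X \ D).ncard = 2
  · obtain ⟨w, hvw, hw⟩ := exists_eq_pair_of_ncard_le_two hD.connected_sdiff hR2.le ⟨hv, hvD⟩
      fun h ↦ by simp [h] at hR2
    have hXD : X = insert v (insert w D) := by grind
    rw [hXD]
    exact (hroot D hDss hD.connected (by omega) u hu).insert_insert hvD (by grind) hvu hvw
  · have hDv : HasRootedNTDSet G (insert v D) v :=
      (hhalf D hDss hD.connected hD3).elim (·.hasRootedNTDSet_insert hvD)
        (·.hasRootedNTDSet_insert hu hvD hvu)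
    have hRv := hroot (X \ D) (by grind) hD.connected_sdiff hR2 v ⟨hv, hvD⟩
    have hXD : X = insert v D ∪ X \ D := by grind
    rw [hXD]
    exact hDv.union hRv (by grind)

lemma hasHalfNTDSet_or_hasSpanningSubdividedStar_of_forall_ssubset
    (hX : (G.induce X).Connected) (hX3 : 3 ≤ X.ncard)
    (hroot : ∀ Y ⊂ X, (G.induce Y).Connected → Y.ncard ≠ 2 → ∀ u ∈ Y, HasRootedNTDSet G Y u)
    (hhalf : ∀ Y ⊂ X, (G.induce Y).Connected → 3 ≤ Y.ncard →
      HasHalfNTDSet G Y ∨ HasSpanningSubdividedStar G Y) :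
    HasHalfNTDSet G X ∨ HasSpanningSubdividedStar G X := by
  obtain ⟨c, L, M, t, hs⟩ | ⟨D, hDX, hD3, hE3, hD, hE⟩ :=
    exists_isSpiderOn_or_exists_connected_parts hX hX3
  · exact hs.hasHalfNTDSet_or_hasSpanningSubdividedStar hX3
  have hDne := Set.nonempty_coe_sort.1 hD.nonempty
  have hDss : D ⊂ X := ⟨hDX, Set.sdiff_nonempty.1 (Set.nonempty_coe_sort.1 hE.nonempty)⟩
  have hEss : X \ D ⊂ X := sdiff_lt hDX hDne.ne_empty
  obtain ⟨p, hp, q, hq, hpq⟩ := exists_adj_of_connected_induce hX hDne hDss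
  have hdisj : Disjoint D (X \ D) := Set.disjoint_sdiff_right
  rw [← Set.union_sdiff_cancel hDX]
  refine .inl ?_
  obtain hDh | hDs := hhalf D hDss hD hD3
  · obtain hEh | hEs := hhalf _ hEss hE hE3
    · exact hDh.union hEh hdisj
    · rw [Set.union_comm]
      exact hEs.hasHalfNTDSet_union (hroot D hDss hD (by omega) p hp) hdisj.symm hq hp hpq
  · exact hDs.hasHalfNTDSet_union (hroot _ hEss hE (by omega) q hq) hdisj hp hq hpq.symm

theorem hasHalfNTDSet_or_hasSpanningSubdividedStar (hX : (G.induce X).Connected)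
    (hX3 : 3 ≤ X.ncard) : HasHalfNTDSet G X ∨ HasSpanningSubdividedStar G X := by
  suffices (X.ncard ≠ 2 → ∀ u ∈ X, HasRootedNTDSet G X u) ∧
      (3 ≤ X.ncard → HasHalfNTDSet G X ∨ HasSpanningSubdividedStar G X) from this.2 hX3
  clear hX3
  induction X using WellFoundedLT.induction with
  | ind X ih =>
    have hroot := fun Y hYX hY ↦ (ih Y hYX hY).1
    have hhalf := fun Y hYX hY ↦ (ih Y hYX hY).2
    exact ⟨fun hX2 u hu ↦ hasRootedNTDSet_of_forall_ssubset hX hX2 hu hroot hhalf,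
      fun hX3 ↦ hasHalfNTDSet_or_hasSpanningSubdividedStar_of_forall_ssubset hX hX3 hroot hhalf⟩

end MainInduction

namespace IsSpiderOn

section Chords

variable {c p x y z : V} {M X : Set V} {t : V → V} (hs : IsSpiderOn G c ∅ M t X)
include hs

lemma isNTDSetOn_of_adj_tip (hx : x ∈ M) (hp : p ∈ insert c (M \ {x})) (hxp : G.Adj (t x) p) :
    IsNTDSetOn G X (insert c (M \ {x})) := by
  have hcM := hs.center_notMem_mids
  obtain ⟨rfl, -, hmid, htip, -, -, hnot⟩ := hs
  refine ⟨by grind, ?_⟩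
  rintro w ⟨rfl | (hw | hw) | ⟨y, hy, rfl⟩, hwS⟩
  · grind
  · grind
  · obtain rfl : w = x := by grind
    exact ⟨⟨c, by grind, (hmid w hw).symm⟩, .inl ⟨t w, by grind, htip w hw⟩⟩
  · obtain rfl | hyx := eq_or_ne y x
    · exact ⟨⟨p, hp, hxp⟩, .inl ⟨y, by grind, (htip y hy).symm⟩⟩
    · exact ⟨⟨y, by grind, (htip y hy).symm⟩,
        .inr ⟨y, by grind, (htip y hy).symm, c, by grind, (hmid y hy).symm⟩⟩

lemma isNTDSetOn_of_adj_mids (hx : x ∈ M) (hy : y ∈ M) (hxy : G.Adj x y) :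
    IsNTDSetOn G X (insert x (insert y (t '' (M \ {x, y})))) := by
  have hcM := hs.center_notMem_mids
  obtain ⟨rfl, -, hmid, htip, -, -, hnot⟩ := hs
  refine ⟨by grind, ?_⟩
  rintro w ⟨rfl | (hw | hw) | ⟨z, hz, rfl⟩, hwS⟩
  · exact ⟨⟨x, by grind, hmid x hx⟩, .inr ⟨x, by grind, hmid x hx, y, by grind, hxy⟩⟩
  · grind
  · exact ⟨⟨t w, by grind, htip w hw⟩, .inl ⟨c, by grind, (hmid w hw).symm⟩⟩
  · have hzt := (htip z hz).symm
    obtain rfl | rfl : z = x ∨ z = y := by grind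
    · exact ⟨⟨z, by grind, hzt⟩, .inr ⟨z, by grind, hzt, y, by grind, hxy⟩⟩
    · exact ⟨⟨z, by grind, hzt⟩, .inr ⟨z, by grind, hzt, x, by grind, hxy.symm⟩⟩

lemma isNTDSetOn_of_adj_tips (hx : x ∈ M) (hy : y ∈ M) (hz : z ∈ M) (hzx : z ≠ x) (hzy : z ≠ y)
    (hxy : G.Adj (t x) (t y)) : IsNTDSetOn G X (insert c (insert (t x) (M \ {x, y}))) := by
  have hcM := hs.center_notMem_mids
  obtain ⟨rfl, -, hmid, htip, -, -, hnot⟩ := hs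
  refine ⟨by grind, ?_⟩
  rintro w ⟨rfl | (hw | hw) | ⟨v, hv, rfl⟩, hwS⟩
  · grind
  · grind
  · have hwc := (hmid w hw).symm
    exact ⟨⟨c, by grind, hwc⟩, .inr ⟨c, by grind, hwc, z, by grind, hmid z hz⟩⟩
  · have hvt := (htip v hv).symm
    obtain rfl | hvy := eq_or_ne v y
    · exact ⟨⟨t x, by grind, hxy.symm⟩, .inl ⟨v, by grind, hvt⟩⟩
    · exact ⟨⟨v, by grind, hvt⟩, .inr ⟨v, by grind, hvt, c, by grind, (hmid v hv).symm⟩⟩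

variable [Finite V] (hmin : ∀ S, IsNTDSetOn G X S → M.ncard < S.ncard)
include hmin

lemma not_adj_tip (hx : x ∈ M) (hp : p ∈ insert c (M \ {x})) : ¬G.Adj (t x) p := by
  intro hxp
  have := hmin _ (hs.isNTDSetOn_of_adj_tip hx hp hxp)
  have := Set.ncard_insert_le c (M \ {x})
  have := Set.ncard_sdiff_singleton_add_one hx
  omega

lemma not_adj_mids (hx : x ∈ M) (hy : y ∈ M) : ¬G.Adj x y := by
  intro hxy
  have := hmin _ (hs.isNTDSetOn_of_adj_mids hx hy hxy)
  have := Set.ncard_insert_le x (insert y (t '' (M \ {x, y})))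
  have := Set.ncard_insert_le y (t '' (M \ {x, y}))
  have : (t '' (M \ {x, y})).ncard ≤ (M \ {x, y}).ncard := Set.ncard_image_le
  have := Set.ncard_sdiff_add_ncard_of_subset (Set.pair_subset hx hy)
  rw [Set.ncard_pair hxy.ne] at this
  omega

lemma mids_eq_pair_of_adj_tips (hx : x ∈ M) (hy : y ∈ M) (hxy : G.Adj (t x) (t y)) :
    M = {x, y} := by
  refine (Set.pair_subset hx hy).antisymm' fun z hz ↦ ?_
  by_contra hzxy
  have hne : x ≠ y := by rintro rfl; exact hxy.ne rfl
  have := hmin _ (hs.isNTDSetOn_of_adj_tips hx hy hz (by grind) (by grind) hxy)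
  have := Set.ncard_insert_le c (insert (t x) (M \ {x, y}))
  have := Set.ncard_insert_le (t x) (M \ {x, y})
  have := Set.ncard_sdiff_add_ncard_of_subset (Set.pair_subset hx hy)
  rw [Set.ncard_pair hne] at this
  omega

end Chords

end IsSpiderOn

section Iso

variable {c x y : V} {M X : Set V} {t : V → V}

lemma nonempty_iso_of_surjective {W : Type*} [Finite W] {H : SimpleGraph W} (f : W → V)
    (hf : Function.Surjective f) (hcard : Nat.card W ≤ Nat.card V)
    (hadj : ∀ a b, G.Adj (f a) (f b) ↔ H.Adj a b) : Nonempty (G ≃g H) :=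
  ⟨RelIso.symm ⟨.ofBijective f (hf.bijective_of_nat_card_le hcard), hadj _ _⟩⟩

lemma adj_iff_cycleGraph_five_adj {f : Fin 5 → V} (hcycle : ∀ i, G.Adj (f i) (f (i + 1)))
    (hchord : ∀ i, ¬G.Adj (f i) (f (i + 2))) (i j : Fin 5) :
    G.Adj (f i) (f j) ↔ (cycleGraph 5).Adj i j := by
  have hcycle' : G.Adj (f i) (f (i + 4)) := by
    simpa [add_assoc] using (hcycle (i + 4)).symm
  have hchord' : ¬G.Adj (f i) (f (i + 3)) := fun h ↦
    hchord (i + 3) (by simpa [add_assoc] using h.symm)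
  obtain ⟨d, rfl⟩ : ∃ d, j = i + d := ⟨j - i, (add_sub_cancel i j).symm⟩
  rw [cycleGraph_adj, add_sub_cancel_left, sub_add_cancel_left]
  fin_cases d
  · exact iff_of_false (by simp) (by decide)
  · exact iff_of_true (hcycle i) (by decide)
  · exact iff_of_false (hchord i) (by decide)
  · exact iff_of_false hchord' (by decide)
  · exact iff_of_true hcycle' (by decide)

/-- The subdivided star with center `c` and legs `c, x, t x` for `x ∈ M`, as a graph on all of `V`;
vertices outside the legs are isolated. -/
def subdividedStarOn (c : V) (M : Set V) (t : V → V) : SimpleGraph V :=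
  SimpleGraph.fromRel fun u v ↦ u = c ∧ v ∈ M ∨ u ∈ M ∧ v = t u

namespace IsSpiderOn

lemma exists_labelling [Finite V] (hs : IsSpiderOn G c ∅ M t X) :
    ∃ f : ℕ → V, f '' Set.Iio (2 * M.ncard + 1) = X ∧ f 0 = c ∧ f '' Set.Icc 1 M.ncard = M ∧
      ∀ i ∈ Set.Icc 1 M.ncard, f (i + M.ncard) = t (f i) := by
  have : Nonempty V := ⟨c⟩
  set k := M.ncard
  obtain ⟨g, hg⟩ := (Set.finite_Icc 1 k).exists_bijOn_of_encard_eq (t := M) <| by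
    rw [← (Set.finite_Icc 1 k).cast_ncard_eq, ← M.toFinite.cast_ncard_eq, Set.ncard_Icc_nat,
      Nat.add_sub_cancel]
  let f : ℕ → V := fun i ↦ if i = 0 then c else if i ≤ k then g i else t (g (i - k))
  have hmid : ∀ i ∈ Set.Icc 1 k, f i = g i := fun i hi ↦ by grind
  have htip : ∀ i ∈ Set.Icc 1 k, f (i + k) = t (f i) := fun i hi ↦ by grind
  have hM : f '' Set.Icc 1 k = M := (Set.image_congr hmid).trans hg.image_eq
  refine ⟨f, ?_, rfl, hM, htip⟩
  have hI : Set.Iio (2 * k + 1) = insert 0 (Set.Icc 1 k ∪ (· + k) '' Set.Icc 1 k) := by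
    ext i
    simp only [Set.mem_Iio, Set.mem_insert_iff, Set.mem_union, Set.image_add_const_Icc, Set.mem_Icc]
    omega
  rw [hs.eq_verts, hI, Set.image_insert_eq, Set.image_union, Set.image_image, hM,
    Set.image_congr htip, ← Set.image_image t, hM, Set.empty_union]
  rfl

lemma subdividedStarOn_le (hs : IsSpiderOn G c ∅ M t X) :
    subdividedStarOn c M t ≤ G := by
  rintro u v ⟨-, (⟨rfl, hv⟩ | ⟨hu, rfl⟩) | (⟨rfl, hu⟩ | ⟨hv, rfl⟩)⟩
  · exact hs.adj_mid v hv
  · exact hs.adj_tip u hu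
  · exact (hs.adj_mid u hu).symm
  · exact (hs.adj_tip v hv).symm

lemma nonempty_iso_subdividedStar [Finite V] (hs : IsSpiderOn G c ∅ M t Set.univ)
    (hG : G ≤ subdividedStarOn c M t) :
    Nonempty (G ≃g subdividedStar M.ncard) := by
  obtain ⟨f, hf, hf0, hfM, hft⟩ := hs.exists_labelling
  have hcard := hs.ncard_eq
  set k := M.ncard
  rw [Set.ncard_empty] at hcard
  have hinj : Set.InjOn f (Set.Iio (2 * k + 1)) := Set.injOn_of_ncard_image_eq <| by
    rw [hf, Set.ncard_Iio_nat, hcard]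
    omega
  have hsurj : Function.Surjective fun i : Fin (2 * k + 1) ↦ f i := fun v ↦
    let ⟨i, hi, hiv⟩ := hf.ge (Set.mem_univ v)
    ⟨⟨i, hi⟩, hiv⟩
  have hne : ∀ i j : Fin (2 * k + 1), f i ≠ f j ↔ i ≠ j := fun i j ↦
    not_congr ((hinj.eq_iff i.2 j.2).trans Fin.val_inj)
  have hcenter : ∀ i : Fin (2 * k + 1), f i = c ↔ i.val = 0 := fun i ↦ by
    rw [← hf0, hinj.eq_iff i.2 (Nat.succ_pos _)]
  have hmid : ∀ i : Fin (2 * k + 1), f i ∈ M ↔ 1 ≤ i.val ∧ i.val ≤ k := fun i ↦ by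
    rw [← hfM, hinj.mem_image_iff (by grind) i.2, Set.mem_Icc]
  have htip : ∀ i j : Fin (2 * k + 1), f j ∈ M → (f i = t (f j) ↔ i.val = j.val + k) := by
    intro i j hj
    rw [hmid] at hj
    rw [← hft j hj, hinj.eq_iff i.2 (by grind)]
  refine nonempty_iso_of_surjective (fun i : Fin (2 * k + 1) ↦ f i) hsurj ?_ fun i j ↦ ?_
  · rw [← Set.ncard_univ V, hcard, Nat.card_fin]
    omega
  · rw [hG.antisymm hs.subdividedStarOn_le, subdividedStarOn, subdividedStar, fromRel_adj,
      fromRel_adj, hne]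
    grind

lemma nonempty_iso_cycleGraph_five [Finite V] (hs : IsSpiderOn G c ∅ {x, y} t Set.univ)
    (hxy : G.Adj (t x) (t y))
    (hmin : ∀ S, IsNTDSetOn G Set.univ S → ({x, y} : Set V).ncard < S.ncard) :
    Nonempty (G ≃g cycleGraph 5) := by
  have hne : x ≠ y := by rintro rfl; exact hxy.ne rfl
  have hx : x ∈ ({x, y} : Set V) := Set.mem_insert x _
  have hy : y ∈ ({x, y} : Set V) := Set.mem_insert_of_mem x rfl
  let f : Fin 5 → V := ![c, x, t x, t y, y]
  have hcycle : ∀ i, G.Adj (f i) (f (i + 1)) := by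
    have hcx := hs.adj_mid x hx
    have hyc := (hs.adj_mid y hy).symm
    have hxt := hs.adj_tip x hx
    have hty := (hs.adj_tip y hy).symm
    intro i
    fin_cases i <;> assumption
  have hchord : ∀ i, ¬G.Adj (f i) (f (i + 2)) := by
    have hcx : ¬G.Adj c (t x) := fun h ↦ hs.not_adj_tip hmin hx (by simp) h.symm
    have hcy : ¬G.Adj (t y) c := hs.not_adj_tip hmin hy (by simp)
    have hxy : ¬G.Adj (t x) y := hs.not_adj_tip hmin hx (by simp [hne.symm])
    have hyx : ¬G.Adj x (t y) := fun h ↦ hs.not_adj_tip hmin hy (by simp [hne]) h.symm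
    have hmid := hs.not_adj_mids hmin hy hx
    intro i
    fin_cases i <;> assumption
  have hf : Set.range f = Set.univ := by
    rw [hs.eq_verts]
    simp only [f, Matrix.range_cons, Matrix.range_empty]
    grind
  refine nonempty_iso_of_surjective f (Set.range_eq_univ.1 hf) ?_ fun i j ↦ ?_
  · rw [← Set.ncard_univ V, hs.ncard_eq, Set.ncard_pair hne]
    simp
  · exact adj_iff_cycleGraph_five_adj hcycle hchord i j

lemma le_subdividedStarOn [Finite V] (hs : IsSpiderOn G c ∅ M t Set.univ)
    (hmin : ∀ S, IsNTDSetOn G Set.univ S → M.ncard < S.ncard)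
    (htips : ∀ x ∈ M, ∀ y ∈ M, ¬G.Adj (t x) (t y)) :
    G ≤ subdividedStarOn c M t := by
  have hverts : ∀ v, v = c ∨ v ∈ M ∨ ∃ x ∈ M, t x = v := by
    simpa using Set.ext_iff.1 hs.eq_verts.symm
  have htip : ∀ x ∈ M, ∀ p ∈ insert c M, G.Adj p (t x) → p = x := fun x hx p hp hpx ↦ by
    by_contra hne
    exact hs.not_adj_tip hmin hx (p := p) (by grind) hpx.symm
  have hmid : ∀ x ∈ M, ∀ y ∈ M, ¬G.Adj x y := fun x hx y hy ↦ hs.not_adj_mids hmin hx hy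
  intro u v huv
  rw [subdividedStarOn, fromRel_adj]
  refine ⟨huv.ne, ?_⟩
  obtain rfl | hu | ⟨x, hx, rfl⟩ := hverts u <;> obtain rfl | hv | ⟨y, hy, rfl⟩ := hverts v
  · exact absurd rfl huv.ne
  · exact .inl (.inl ⟨rfl, hv⟩)
  · obtain rfl := htip y hy _ (.inl rfl) huv
    exact .inl (.inr ⟨hy, rfl⟩)
  · exact .inr (.inl ⟨rfl, hu⟩)
  · exact absurd huv (hmid u hu v hv)
  · obtain rfl := htip y hy u (.inr hu) huv
    exact .inl (.inr ⟨hu, rfl⟩)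
  · obtain rfl := htip x hx _ (.inl rfl) huv.symm
    exact .inr (.inr ⟨hx, rfl⟩)
  · obtain rfl := htip x hx v (.inr hv) huv.symm
    exact .inr (.inr ⟨hv, rfl⟩)
  · exact absurd huv (htips x hx y hy)

lemma nonempty_iso_subdividedStar_of_forall_lt_ncard [Finite V]
    (hs : IsSpiderOn G c ∅ M t Set.univ)
    (hmin : ∀ S, IsNTDSetOn G Set.univ S → M.ncard < S.ncard)
    (hC5 : ¬Nonempty (G ≃g cycleGraph 5)) : Nonempty (G ≃g subdividedStar M.ncard) := by
  by_cases! htips : ∃ x ∈ M, ∃ y ∈ M, G.Adj (t x) (t y)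
  · obtain ⟨x, hx, y, hy, hxy⟩ := htips
    obtain rfl := hs.mids_eq_pair_of_adj_tips hmin hx hy hxy
    exact absurd (hs.nonempty_iso_cycleGraph_five hxy hmin) hC5
  · exact hs.nonempty_iso_subdividedStar (hs.le_subdividedStarOn hmin htips)

end IsSpiderOn

end Iso

theorem stmt4 [Fintype V] (G : SimpleGraph V) (hconn : G.Connected)
    (hn : 3 ≤ Fintype.card V) (hC5 : ¬ Nonempty (G ≃g cycleGraph 5))
    (h : 2 * ntdNum G = Fintype.card V + 1) :
    ∃ k : ℕ, 1 ≤ k ∧ Nonempty (G ≃g subdividedStar k) := by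
  have hX : (G.induce Set.univ).Connected := (induceUnivIso G).connected_iff.2 hconn
  have hcard : (Set.univ : Set V).ncard = Fintype.card V := by
    rw [Set.ncard_univ, Nat.card_eq_fintype_card]
  obtain ⟨S, hS, hSc⟩ | ⟨c, M, t, hM, hs⟩ :=
    hasHalfNTDSet_or_hasSpanningSubdividedStar hX (hcard ▸ hn)
  · have := hS.ntdNum_le_ncard
    omega
  · have hcardM := hs.ncard_eq
    have hmin : ∀ S, IsNTDSetOn G Set.univ S → M.ncard < S.ncard := fun S hS ↦ by
      have := hS.ntdNum_le_ncard
      omega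
    exact ⟨M.ncard, hM.ncard_pos, hs.nonempty_iso_subdividedStar_of_forall_lt_ncard hmin hC5⟩
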